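/- Let (N, B, L) be a Hadamard triple in ℝ with 0 ∈ B ∩ L, write d = gcd(B), and let K(N,L) be the self-similar set generated by the maps τ_ℓ(x) = (x+ℓ)/N, ℓ ∈ L. Then every x ∈ K(N,L) ∩ (ℤ/d), where ℤ/d = { m/d : m ∈ ℤ }, is a periodic point of the iterated function system: there exist k ∈ ℕ and ℓ_1, ℓ_2, …, ℓ_k ∈ L such that τ_{ℓ_k} ∘ τ_{ℓ_{k−1}} ∘ ⋯ ∘ τ_{ℓ_1}(x) = x. -/

import Mathlib

/-- `(N,B,L)` is a Hadamard triple in `ℝ`. -/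
def IsHadamardTriple (N : ℕ) (B L : Finset ℤ) : Prop :=
  2 ≤ N ∧ 2 ≤ B.card ∧ B.card = L.card ∧
    ∀ l ∈ L, ∀ l' ∈ L, l ≠ l' →
      ∑ b ∈ B, Complex.exp (2 * Real.pi * Complex.I * (b : ℂ) * ((l : ℂ) - (l' : ℂ)) / (N : ℂ)) = 0

/-- The self-similar set `K(N,L) = { ∑_{i=1}^∞ ℓ_i/N^i : ℓ_i ∈ L }`. -/
noncomputable def KsetZ (N : ℕ) (L : Finset ℤ) : Set ℝ :=
  { x : ℝ | ∃ a : ℕ → ℤ, (∀ i, a i ∈ L) ∧ x = ∑' i : ℕ, (a i : ℝ) / (N : ℝ) ^ (i + 1) }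

/-!
A bounded set meets `ℤ/d` in finitely many points, so `S = K(N,L) ∩ (ℤ/d)` is finite. Each `x ∈ S`
is `τ_ℓ(y)` for some `ℓ ∈ L` and `y ∈ K(N,L)`, and `y = N x - ℓ` is again in `ℤ/d`. Conversely
`x ∈ S` is determined by `y`: if `τ_ℓ(y)` and `τ_ℓ'(y)` both lie in `ℤ/d`, then `N ∣ d (ℓ - ℓ')`.
For `ℓ ≠ ℓ'` every exponential in the orthogonality relation would then be `1`, and their sum could
not vanish. Choosing a preimage in `S` of each point is therefore an injective self-map of a finite
set, all of whose points are periodic.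
-/

section HadamardDigits

theorem exp_two_pi_mul_I_mul_intCast_div_eq_one {N : ℕ} (hN : N ≠ 0) {z : ℤ} (hz : (N : ℤ) ∣ z) :
    Complex.exp (2 * Real.pi * Complex.I * z / N) = 1 := by
  obtain ⟨c, rfl⟩ := hz
  have hN' : (N : ℂ) ≠ 0 := Nat.cast_ne_zero.mpr hN
  rw [← Complex.exp_int_mul_two_pi_mul_I c]
  congr 1
  push_cast
  field_simp

theorem gcd_id_ne_zero_of_nontrivial {α : Type*} [CommMonoidWithZero α] [NormalizedGCDMonoid α]
    {s : Finset α} (hs : s.Nontrivial) : s.gcd id ≠ 0 :=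
  Finset.gcd_ne_zero_iff.mpr (hs.exists_ne 0)

variable {N : ℕ} {B L : Finset ℤ}

theorem IsHadamardTriple.nontrivial (h : IsHadamardTriple N B L) : B.Nontrivial :=
  Finset.one_lt_card_iff_nontrivial.mp h.2.1

theorem IsHadamardTriple.eq_of_gcd_mul_modEq (h : IsHadamardTriple N B L) {l l' : ℤ}
    (hl : l ∈ L) (hl' : l' ∈ L) (hmod : B.gcd id * l ≡ B.gcd id * l' [ZMOD N]) : l = l' := by
  obtain ⟨hN, hB, -, horth⟩ := h
  by_contra hne
  have hdvd : ∀ b ∈ B, (N : ℤ) ∣ b * (l - l') := fun b hb => by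
    have hgcd : (N : ℤ) ∣ B.gcd id * (l - l') := by
      rw [mul_sub]
      exact hmod.symm.dvd
    exact hgcd.trans (mul_dvd_mul_right (Finset.gcd_dvd (f := id) hb) _)
  have hexp : ∀ b ∈ B,
      Complex.exp (2 * Real.pi * Complex.I * (b : ℂ) * ((l : ℂ) - (l' : ℂ)) / (N : ℂ)) = 1 :=
    fun b hb => by
      simpa only [Int.cast_mul, Int.cast_sub, mul_assoc] using
        exp_two_pi_mul_I_mul_intCast_div_eq_one (by omega : N ≠ 0) (hdvd b hb)
  have hcard : (B.card : ℂ) = 0 := by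
    simpa only [Finset.sum_congr rfl hexp, Finset.sum_const, nsmul_one] using horth l hl l' hl' hne
  have : B.card = 0 := Nat.cast_eq_zero.mp hcard
  omega

end HadamardDigits

section RadixExpansion

variable {𝕜 : Type*} [NormedField 𝕜] {a : ℕ → 𝕜} {b : 𝕜} {C : ℝ}

theorem hasSum_const_div_pow_succ {r : ℝ} (hr : 1 < r) (C : ℝ) :
    HasSum (fun i : ℕ => C / r ^ (i + 1)) (C / (r - 1)) := by
  have hgeom := (hasSum_geometric_of_lt_one (inv_nonneg.mpr (zero_le_one.trans hr.le))
    (inv_lt_one_of_one_lt₀ hr)).mul_left (C / r)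
  have hr1 : r - 1 ≠ 0 := (sub_pos.mpr hr).ne'
  have hr0 : r ≠ 0 := (zero_lt_one.trans hr).ne'
  have hterm : (fun i : ℕ => C / r ^ (i + 1)) = fun i => C / r * r⁻¹ ^ i := funext fun i => by
    rw [pow_succ', inv_pow, ← div_div, div_eq_mul_inv (C / r)]
  have hvalue : C / (r - 1) = C / r * (1 - r⁻¹)⁻¹ := by field_simp
  rwa [hterm, hvalue]

theorem norm_div_pow_succ_le (ha : ∀ i, ‖a i‖ ≤ C) (i : ℕ) :
    ‖a i / b ^ (i + 1)‖ ≤ C / ‖b‖ ^ (i + 1) := by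
  rw [norm_div, norm_pow]
  gcongr
  exact ha i

theorem norm_tsum_div_pow_succ_le (hb : 1 < ‖b‖) (ha : ∀ i, ‖a i‖ ≤ C) :
    ‖∑' i, a i / b ^ (i + 1)‖ ≤ C / (‖b‖ - 1) :=
  tsum_of_norm_bounded (hasSum_const_div_pow_succ hb C) (norm_div_pow_succ_le ha)

theorem tsum_div_pow_succ_eq [CompleteSpace 𝕜] (hb : 1 < ‖b‖) (ha : ∀ i, ‖a i‖ ≤ C) :
    ∑' i, a i / b ^ (i + 1) = (∑' i, a (i + 1) / b ^ (i + 1) + a 0) / b := by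
  have hsum : Summable fun i => a i / b ^ (i + 1) :=
    .of_norm_bounded (hasSum_const_div_pow_succ hb C).summable (norm_div_pow_succ_le ha)
  rw [hsum.tsum_eq_zero_add, add_div, ← tsum_div_const, add_comm]
  simp only [pow_succ b (_ + 1), div_div, zero_add, pow_one]

end RadixExpansion

section SelfSimilarSet

variable {N : ℕ} {L : Finset ℤ}

theorem exists_forall_mem_norm_intCast_le (L : Finset ℤ) : ∃ C : ℝ, ∀ l ∈ L, ‖(l : ℝ)‖ ≤ C := by
  obtain ⟨C, hC⟩ := (L.image fun l : ℤ => ‖(l : ℝ)‖).exists_le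
  exact ⟨C, fun l hl => hC _ (Finset.mem_image_of_mem _ hl)⟩

theorem one_lt_norm_natCast (hN : 2 ≤ N) : 1 < ‖(N : ℝ)‖ := by
  rw [Real.norm_natCast]
  exact_mod_cast hN

theorem isBounded_KsetZ (hN : 2 ≤ N) (L : Finset ℤ) : Bornology.IsBounded (KsetZ N L) := by
  obtain ⟨C, hC⟩ := exists_forall_mem_norm_intCast_le L
  refine isBounded_iff_forall_norm_le.mpr ⟨C / (‖(N : ℝ)‖ - 1), ?_⟩
  rintro _ ⟨a, ha, rfl⟩
  exact norm_tsum_div_pow_succ_le (one_lt_norm_natCast hN) fun i => hC _ (ha i)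

theorem exists_mem_KsetZ_eq_add_div (hN : 2 ≤ N) {x : ℝ} (hx : x ∈ KsetZ N L) :
    ∃ y ∈ KsetZ N L, ∃ l ∈ L, x = (y + l) / N := by
  obtain ⟨C, hC⟩ := exists_forall_mem_norm_intCast_le L
  obtain ⟨a, ha, rfl⟩ := hx
  exact ⟨_, ⟨fun i => a (i + 1), fun i => ha (i + 1), rfl⟩, a 0, ha 0,
    tsum_div_pow_succ_eq (one_lt_norm_natCast hN) fun i => hC _ (ha i)⟩

end SelfSimilarSet

section FractionLattice

theorem finite_inter_intCast_div_of_isBounded {s : Set ℝ} (hs : Bornology.IsBounded s) {d : ℤ}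
    (hd : d ≠ 0) : (s ∩ {y | ∃ m : ℤ, y = m / d}).Finite := by
  obtain ⟨R, hR⟩ := isBounded_iff_forall_norm_le.mp hs
  have hd' : 0 < |(d : ℝ)| := abs_pos.mpr (Int.cast_ne_zero.mpr hd)
  refine ((Set.finite_Icc (-⌈R * |(d : ℝ)|⌉) ⌈R * |(d : ℝ)|⌉).image
    fun m : ℤ => (m : ℝ) / d).subset ?_
  rintro _ ⟨hy, m, rfl⟩
  have hm : |(m : ℝ)| ≤ R * |(d : ℝ)| := by
    simpa only [Real.norm_eq_abs, abs_div, div_le_iff₀ hd'] using hR _ hy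
  exact ⟨m, abs_le.mp (by exact_mod_cast hm.trans (Int.le_ceil _)), rfl⟩

variable {K : Type*} [Field K] {N d : ℤ}

theorem exists_eq_intCast_div_of_add_div_eq (hN : (N : K) ≠ 0) (hd : (d : K) ≠ 0) {y : K} {l m : ℤ}
    (h : (m : K) / d = (y + l) / N) : ∃ n : ℤ, y = n / d := by
  refine ⟨N * m - d * l, ?_⟩
  field_simp at h ⊢
  push_cast
  linear_combination -h

theorem mul_modEq_mul_of_add_div_eq [CharZero K] (hN : N ≠ 0) (hd : d ≠ 0) {y : K} {l l' m m' : ℤ}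
    (h : (m : K) / d = (y + l) / N) (h' : (m' : K) / d = (y + l') / N) :
    d * l ≡ d * l' [ZMOD N] := by
  have hN' : (N : K) ≠ 0 := Int.cast_ne_zero.mpr hN
  have hd' : (d : K) ≠ 0 := Int.cast_ne_zero.mpr hd
  refine Int.modEq_iff_dvd.mpr ⟨m' - m, ?_⟩
  field_simp at h h'
  have : (d : K) * l' - d * l = N * (m' - m) := by linear_combination h - h'
  exact_mod_cast this

end FractionLattice

theorem exists_closed_chain_of_finite {α : Type*} {s : Set α} (hs : s.Finite) {r : α → α → Prop}
    (hpred : ∀ x ∈ s, ∃ y ∈ s, r y x)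
    (hdet : ∀ x ∈ s, ∀ x' ∈ s, ∀ y, r y x → r y x' → x = x') {x : α} (hx : x ∈ s) :
    ∃ k : ℕ, 1 ≤ k ∧ ∃ xs : ℕ → α,
      xs 0 = x ∧ xs k = x ∧ ∀ i < k, r (xs i) (xs (i + 1)) := by
  have : Finite s := hs
  choose! p hps hpr using hpred
  let f : s → s := fun z => ⟨p z, hps z z.2⟩
  have hf : Function.Injective f := fun z z' hzz' => by
    have hp : p z = p z' := congrArg Subtype.val hzz'
    exact Subtype.ext (hdet z z.2 z' z'.2 (p z) (hpr z z.2) (hp ▸ hpr z' z'.2))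
  obtain ⟨k, hk, hper⟩ := Function.mem_periodicPts.mp (hf.mem_periodicPts ⟨x, hx⟩)
  -- `f` steps backwards along `r`, so its cycle is traversed in reverse.
  refine ⟨k, hk, fun i => f^[k - i] ⟨x, hx⟩, ?_, ?_, fun i hi => ?_⟩
  · exact congrArg Subtype.val hper
  · simp only [Nat.sub_self, Function.iterate_zero, id_eq]
  · obtain ⟨j, rfl⟩ := Nat.exists_eq_add_of_lt hi
    have hi_sub : i + j + 1 - i = j + 1 := by omega
    have hsucc_sub : i + j + 1 - (i + 1) = j := by omega
    simp only [hi_sub, hsucc_sub, Function.iterate_succ_apply']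
    exact hpr _ (Subtype.property _)

theorem periodic_point_of_integer_point_general {N : ℕ} (hN : 2 ≤ N) {L : Finset ℤ} {d : ℤ}
    (hd : d ≠ 0) (hL : ∀ l ∈ L, ∀ l' ∈ L, d * l ≡ d * l' [ZMOD N] → l = l')
    {x : ℝ} (hx : x ∈ KsetZ N L ∩ {y : ℝ | ∃ m : ℤ, y = (m : ℝ) / (d : ℝ)}) :
    ∃ k : ℕ, 1 ≤ k ∧ ∃ xs : ℕ → ℝ,
      xs 0 = x ∧ xs k = x ∧
      ∀ i < k, ∃ l ∈ L, xs (i + 1) = (xs i + (l : ℝ)) / (N : ℝ) := by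
  have hN0 : (N : ℤ) ≠ 0 := by omega
  refine exists_closed_chain_of_finite (r := fun y z => ∃ l ∈ L, z = (y + (l : ℝ)) / (N : ℝ))
    (finite_inter_intCast_div_of_isBounded (isBounded_KsetZ hN L) hd) ?_ ?_ hx
  · rintro _ ⟨hzK, m, rfl⟩
    obtain ⟨y, hyK, l, hl, hzy⟩ := exists_mem_KsetZ_eq_add_div hN hzK
    have hy : ∃ n : ℤ, y = n / d := exists_eq_intCast_div_of_add_div_eq (N := N)
      (Int.cast_ne_zero.mpr hN0) (Int.cast_ne_zero.mpr hd) hzy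
    exact ⟨y, ⟨hyK, hy⟩, l, hl, hzy⟩
  · rintro _ ⟨-, m, rfl⟩ _ ⟨-, m', rfl⟩ y ⟨l, hl, hz⟩ ⟨l', hl', hz'⟩
    have hll' : l = l' := hL l hl l' hl' (mul_modEq_mul_of_add_div_eq hN0 hd hz hz')
    rw [hz, hz', hll']

/-- Every point of `K(N,L) ∩ (ℤ/d)` is a periodic point of the IFS
`{τ_ℓ(x) = (x+ℓ)/N : ℓ ∈ L}`: there is a chain `x = x₀, x₁, …, x_k = x`
with `x_{i+1} = τ_{ℓ_{i+1}}(x_i)` for some `ℓ_{i+1} ∈ L`. -/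
theorem periodic_point_of_integer_point (N : ℕ) (B L : Finset ℤ)
    (h : IsHadamardTriple N B L) (hB0 : (0 : ℤ) ∈ B) (hL0 : (0 : ℤ) ∈ L)
    (d : ℤ) (hd : d = B.gcd id)
    (x : ℝ) (hx : x ∈ KsetZ N L ∩ { y : ℝ | ∃ m : ℤ, y = (m : ℝ) / (d : ℝ) }) :
    ∃ k : ℕ, 1 ≤ k ∧ ∃ xs : ℕ → ℝ,
      xs 0 = x ∧ xs k = x ∧
      ∀ i < k, ∃ l ∈ L, xs (i + 1) = (xs i + (l : ℝ)) / (N : ℝ) :=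
  periodic_point_of_integer_point_general h.1 (hd ▸ gcd_id_ne_zero_of_nontrivial h.nontrivial)
    (fun _ hl _ hl' hmod => h.eq_of_gcd_mul_modEq hl hl' (hd ▸ hmod)) hx
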